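/- arXiv:2601.15767 — 2 statements merged into one kernel-verified Lean document; each statement's English description precedes it below -/
import Mathlib

section
/- Let n, m, N be positive integers, let M ∈ ℂ^{m×m} be Hermitian positive semidefinite, let R ∈ ℂ^{n×m}, let w_0, …, w_{N−1} > 0, let t'_0, …, t'_{N−1} ∈ [0,1), let B ≥ 0, and let D : ℂ^{n×m} → ℂ^{n×m} be a continuous map satisfying ‖D(H)‖_F ≤ B for all H. Define the inner-loop map T : ℂ^{n×m} → ℂ^{n×m} by T(H_0) = H_N, where H_{i+1} = t'_i · H_0 + (1 − t'_i) · (R + w_i^{−1} D(H_i)) (M + w_i^{−1} I)^{−1} for i = 0, …, N−1. Then T admits at least one fixed point H* = T(H*), and this fixed point lies in the closed Frobenius-norm ball of radius R_limit = max_{0 ≤ i < N} ‖R (M + w_i^{−1} I)^{−1}‖_F + B. -/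
open Matrix
open scoped ComplexOrder

/-- The Frobenius norm of a complex matrix. -/
noncomputable def frobNorm {n m : ℕ} (A : Matrix (Fin n) (Fin m) ℂ) : ℝ :=
  Real.sqrt (∑ i, ∑ j, ‖A i j‖ ^ 2)

/-- The inner loop of the RC-Flow algorithm: starting from the anchor `H0`, it iterates
`H_{i+1} = t'_i • H0 + (1 - t'_i) • (R + w_i⁻¹ • D(H_i)) * (M + w_i⁻¹ • 1)⁻¹`. -/
noncomputable def innerIter {n m : ℕ} (M : Matrix (Fin m) (Fin m) ℂ)
    (R : Matrix (Fin n) (Fin m) ℂ) (w t' : ℕ → ℝ)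
    (D : Matrix (Fin n) (Fin m) ℂ → Matrix (Fin n) (Fin m) ℂ)
    (H0 : Matrix (Fin n) (Fin m) ℂ) : ℕ → Matrix (Fin n) (Fin m) ℂ
  | 0 => H0
  | i + 1 => t' i • H0 +
      (1 - t' i) • ((R + (w i)⁻¹ • D (innerIter M R w t' D H0 i)) * (M + (w i)⁻¹ • 1)⁻¹)

section brouwer
variable {E : Type*} [NormedAddCommGroup E] [InnerProductSpace ℝ E] [FiniteDimensional ℝ E]

lemma bw_bij (g : E → E) (K : NNReal) (hg : LipschitzWith K g) (t : NNReal) (ht : t * K < 1) :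
    Function.Bijective (fun x => x + (t : ℝ) • g x) := by
  have hc : ∀ y : E, ContractingWith (t * K) (fun x => y - (t : ℝ) • g x) := by
    intro y
    refine ⟨ht, LipschitzWith.of_dist_le_mul fun a b => ?_⟩
    have := hg.dist_le_mul a b
    rw [dist_sub_left, dist_smul₀, Real.norm_of_nonneg t.coe_nonneg, NNReal.coe_mul, mul_assoc]
    exact mul_le_mul_of_nonneg_left this t.2
  constructor
  · intro a b hab
    simp only at hab
    refine (hc (a + (t : ℝ) • g a)).fixedPoint_unique' (x := a) (y := b) ?_ ?_
    · simp [Function.IsFixedPt]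
    · rw [hab]; simp [Function.IsFixedPt]
  · intro y
    refine ⟨(hc y).fixedPoint _, ?_⟩
    have := (hc y).fixedPoint_isFixedPt
    rw [Function.IsFixedPt] at this
    simp only
    nth_rewrite 1 [← this]
    simp

lemma bw_det_ne (A : E →L[ℝ] E) (h : ‖A‖ < 1) : (1 + A).det ≠ 0 := by
  have hu : IsUnit (1 + A) := by
    have := isUnit_one_sub_of_norm_lt_one (x := -A) (by rwa [norm_neg])
    simpa using this
  have h2 : IsUnit ((1 + A : E →L[ℝ] E) : E →ₗ[ℝ] E) :=
    hu.map (ContinuousLinearMap.toLinearMapRingHom : (E →L[ℝ] E) →+* (E →ₗ[ℝ] E))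
  exact (h2.map LinearMap.det).ne_zero

lemma bw_det_pos (A : E →L[ℝ] E) (h : ‖A‖ < 1) : 0 < (1 + A).det := by
  by_contra hneg
  push Not at hneg
  have hcont : Continuous (fun s : ℝ => (1 + s • A).det) := by
    exact (ContinuousLinearMap.continuous_det (𝕜 := ℝ) (E := E)).comp
      (by fun_prop : Continuous fun s : ℝ => 1 + s • A)
  have := intermediate_value_Icc' (zero_le_one (α := ℝ)) hcont.continuousOn
  obtain ⟨s, hs, hs0⟩ := this (show (0 : ℝ) ∈ _ by
    refine ⟨by simpa only [one_smul] using hneg, ?_⟩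
    simp [ContinuousLinearMap.det])
  refine bw_det_ne (s • A) ?_ hs0
  rw [norm_smul, Real.norm_of_nonneg hs.1]
  nlinarith [hs.2, norm_nonneg A, hs.1]

lemma bw_poly (A : E →L[ℝ] E) : ∃ P : Polynomial ℝ, P.natDegree ≤ Module.finrank ℝ E ∧
    ∀ t : ℝ, P.eval t = (1 + t • A).det := by
  let b := Module.finBasis ℝ E
  let A' := LinearMap.toMatrix b b (A : E →ₗ[ℝ] E)
  refine ⟨_, (Polynomial.natDegree_det_X_add_C_le A' 1).trans (by simp), fun t => ?_⟩
  rw [ContinuousLinearMap.det, ← LinearMap.det_toMatrix b, ← Polynomial.coe_evalRingHom, RingHom.map_det]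
  congr 1
  ext i j
  simp [A', Matrix.one_apply, Matrix.smul_apply, LinearMap.toMatrix_one]
  split_ifs <;> simp <;> ring


lemma bw_vol [MeasurableSpace E] [BorelSpace E] (r : E → E) (K : NNReal)
    (hr : ContDiff ℝ 1 r) (hlip : LipschitzWith K r)
    (hn : ∀ x, ‖r x‖ = 1) (ρ : ℝ) (hρ : 0 < ρ) (hout : ∀ x, ρ ≤ ‖x‖ → r x = (‖x‖⁻¹) • x)
    (t : NNReal) (ht : t * (K + 1) < 1) :
    ∫ x in Metric.closedBall (0 : E) ρ, (1 + (t : ℝ) • (fderiv ℝ r x - 1)).det =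
      ((1 - t) * ρ + t) ^ (Module.finrank ℝ E) *
        (MeasureTheory.volume : MeasureTheory.Measure E).real (Metric.ball 0 1) := by
  have ht1 : (t : ℝ) < 1 := by
    have : (t : ℝ) * (K + 1) < 1 := by exact_mod_cast ht
    nlinarith [t.coe_nonneg, K.coe_nonneg, mul_nonneg t.coe_nonneg K.coe_nonneg]
  have ht0 := t.coe_nonneg
  have hg : LipschitzWith (K + 1) (fun x => r x - x) := hlip.sub LipschitzWith.id
  have hbij := bw_bij _ _ hg t ht
  set f : E → E := fun x => x + (t : ℝ) • (r x - x) with hf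
  have hd : ∀ x, HasFDerivAt f (1 + (t : ℝ) • (fderiv ℝ r x - 1)) x := by
    intro x
    have h1 := (hr.differentiable (by simp) x).hasFDerivAt
    exact (hasFDerivAt_id x).add ((h1.sub (hasFDerivAt_id x)).const_smul (t : ℝ))
  have hpos : ∀ x, 0 < (1 + (t : ℝ) • (fderiv ℝ r x - 1)).det := by
    intro x
    apply bw_det_pos
    have h1 := (hr.differentiable (by simp) x).hasFDerivAt
    have h2 : ‖fderiv ℝ r x - 1‖ ≤ (K + 1 : NNReal) := by
      have h3 : HasFDerivAt (fun x => r x - x) (fderiv ℝ r x - 1) x := h1.sub (hasFDerivAt_id x)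
      exact h3.le_of_lipschitz hg
    rw [norm_smul, Real.norm_of_nonneg ht0]
    calc (t : ℝ) * _ ≤ t * (K + 1 : NNReal) := mul_le_mul_of_nonneg_left h2 ht0
      _ < 1 := by exact_mod_cast ht
  have hfe : ∀ x, f x = (1 - (t : ℝ)) • x + (t : ℝ) • r x := by
    intro x; simp only [hf]; module
  have himg : f '' Metric.closedBall (0 : E) ρ = Metric.closedBall 0 ((1 - t) * ρ + t) := by
    ext y
    obtain ⟨x, rfl⟩ := hbij.2 y
    rw [hbij.1.mem_set_image, mem_closedBall_zero_iff, mem_closedBall_zero_iff, hfe]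
    constructor
    · intro hx
      refine (norm_add_le _ _).trans ?_
      rw [norm_smul, norm_smul, hn, Real.norm_of_nonneg ht0, Real.norm_of_nonneg (by linarith)]
      nlinarith
    · intro hx
      by_contra hlt
      push Not at hlt
      have hx0 : 0 < ‖x‖ := hρ.trans hlt
      rw [hout x hlt.le, smul_smul, ← add_smul, norm_smul, Real.norm_of_nonneg
        (by have := sub_pos.2 ht1; positivity), add_mul, mul_assoc, inv_mul_cancel₀ hx0.ne'] at hx
      nlinarith
  have hcv := MeasureTheory.integral_image_eq_integral_abs_det_fderiv_smul
    (MeasureTheory.volume : MeasureTheory.Measure E)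
    (measurableSet_closedBall (x := (0 : E)) (ε := ρ))
    (fun x _ => (hd x).hasFDerivWithinAt) hbij.1.injOn (fun _ => (1 : ℝ))
  rw [himg] at hcv
  simp only [smul_eq_mul, mul_one, abs_of_pos (hpos _)] at hcv
  rw [← hcv, MeasureTheory.setIntegral_const, smul_eq_mul, mul_one,
    MeasureTheory.Measure.addHaar_real_closedBall _ _ (by nlinarith)]

lemma bw_core [MeasurableSpace E] [BorelSpace E] (r : E → E) (K : NNReal)
    (hr : ContDiff ℝ 1 r) (hlip : LipschitzWith K r)
    (hn : ∀ x, ‖r x‖ = 1) (ρ : ℝ) (hρ : 0 < ρ) (hout : ∀ x, ρ ≤ ‖x‖ → r x = (‖x‖⁻¹) • x) :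
    False := by
  set d := Module.finrank ℝ E with hd
  set c := (MeasureTheory.volume : MeasureTheory.Measure E).real (Metric.ball 0 1) with hc
  have hcpos : 0 < c := by
    rw [hc, MeasureTheory.measureReal_def]
    exact ENNReal.toReal_pos (Metric.measure_ball_pos _ _ one_pos).ne'
      (MeasureTheory.measure_ball_lt_top).ne
  let s := Finset.range (d + 1)
  let τ : ℕ → NNReal := fun j => ((K + 1) * (j + 2))⁻¹
  have hτ : ∀ j, τ j * (K + 1) < 1 := by
    intro j
    have h1 : (0 : NNReal) < K + 1 := by positivity
    simp only [τ]
    rw [mul_inv, mul_right_comm, inv_mul_cancel₀ h1.ne', one_mul]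
    refine inv_lt_one_of_one_lt₀ ?_
    have : (0 : NNReal) ≤ j := by positivity
    calc (1 : NNReal) < 2 := by norm_num
      _ ≤ j + 2 := by simp
  let v : ℕ → ℝ := fun j => τ j
  have hvs : Set.InjOn v s := by
    intro i _ j _ hij
    have h1 : (0 : NNReal) < K + 1 := by positivity
    have h2 : τ i = τ j := NNReal.coe_injective hij
    simp only [τ] at h2
    have h3 := mul_left_cancel₀ h1.ne' (inv_injective h2)
    exact_mod_cast add_right_cancel h3
  -- interpolation at 1
  have hint : ∀ P : Polynomial ℝ, P.natDegree ≤ d →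
      P.eval 1 = ∑ j ∈ s, P.eval (v j) * (Lagrange.basis s v j).eval 1 := by
    intro P hP
    have hdeg : P.degree < s.card := by
      refine lt_of_le_of_lt Polynomial.degree_le_natDegree ?_
      simp only [s, Finset.card_range]
      exact_mod_cast Nat.lt_succ_of_le hP
    conv_lhs => rw [Lagrange.eq_interpolate hvs hdeg, Lagrange.interpolate_apply]
    simp [Polynomial.eval_finsetSum]
  have hdet1 : ∀ x, (fderiv ℝ r x).det = 0 := by
    intro x
    by_contra hne
    have hu : IsUnit (LinearMap.det ((fderiv ℝ r x) : E →ₗ[ℝ] E)) := isUnit_iff_ne_zero.2 hne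
    have hsurj : Function.Surjective ((fderiv ℝ r x) : E →ₗ[ℝ] E) :=
      (((Module.End.isUnit_iff _).1 ((LinearMap.isUnit_iff_isUnit_det _).2 hu))).2
    obtain ⟨u, hu⟩ := hsurj (r x)
    have h1 := (hr.differentiable (by simp) x).hasFDerivAt
    have h2 := h1.inner ℝ h1
    have h3 : (fun t => inner ℝ (r t) (r t)) = fun _ => (1 : ℝ) := by
      ext y; simp [hn]
    rw [h3] at h2
    have h4 := congrArg (fun L => L u) (h2.unique (hasFDerivAt_const (1 : ℝ) x))
    have hu' : fderiv ℝ r x u = r x := hu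
    simp [hu', hn] at h4
  have hx : ∀ x, 0 = ∑ j ∈ s, (1 + (v j) • (fderiv ℝ r x - 1)).det *
      (Lagrange.basis s v j).eval 1 := by
    intro x
    obtain ⟨P, hP, hPe⟩ := bw_poly (fderiv ℝ r x - 1)
    have := hint P hP
    simp only [hPe] at this
    rw [← this, one_smul, add_sub_cancel, hdet1]
  have hI : (0 : ℝ) = ∑ j ∈ s, (((1 - v j) * ρ + v j) ^ d * c) *
      (Lagrange.basis s v j).eval 1 := by
    calc (0 : ℝ) = ∫ x in Metric.closedBall (0 : E) ρ, ∑ j ∈ s,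
          (1 + (v j) • (fderiv ℝ r x - 1)).det * (Lagrange.basis s v j).eval 1 := by
          simp only [← hx, MeasureTheory.integral_zero]
      _ = _ := by
          rw [MeasureTheory.integral_finsetSum]
          · refine Finset.sum_congr rfl fun j _ => ?_
            rw [MeasureTheory.integral_mul_const]
            congr 1
            exact bw_vol r K hr hlip hn ρ hρ hout (τ j) (hτ j)
          · intro j _
            apply ContinuousOn.integrableOn_compact (isCompact_closedBall _ _)
            apply Continuous.continuousOn
            have hc1 : Continuous fun x => 1 + (v j) • (fderiv ℝ r x - 1) := by
              have := hr.continuous_fderiv (by simp)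
              fun_prop
            exact ((ContinuousLinearMap.continuous_det (𝕜 := ℝ) (E := E)).comp hc1).mul
              continuous_const
  have hQ := hint ((Polynomial.C ρ + Polynomial.C (1 - ρ) * Polynomial.X) ^ d * Polynomial.C c) (by
    refine (Polynomial.natDegree_mul_C_le _ _).trans ?_
    refine Polynomial.natDegree_pow_le.trans ?_
    have : (Polynomial.C ρ + Polynomial.C (1 - ρ) * Polynomial.X).natDegree ≤ 1 := by
      compute_degree
    nlinarith)
  have : (0 : ℝ) = c := by
    calc (0 : ℝ) = _ := hI
      _ = _ := by
        refine Eq.trans ?_ hQ.symm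
        refine Finset.sum_congr rfl fun j _ => ?_
        simp only [Polynomial.eval_mul, Polynomial.eval_pow, Polynomial.eval_add,
          Polynomial.eval_C, Polynomial.eval_X]
        ring
      _ = c := by simp
  exact hcpos.ne this

lemma bw_normalize (δ : ℝ) (hδ : 0 < δ) (a b : E) (ha : δ ≤ ‖a‖) (hb : δ ≤ ‖b‖) :
    ‖(‖a‖⁻¹) • a - (‖b‖⁻¹) • b‖ ≤ 2 / δ * ‖a - b‖ := by
  have ha0 : 0 < ‖a‖ := hδ.trans_le ha
  have hb0 : 0 < ‖b‖ := hδ.trans_le hb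
  have h1 : (‖a‖⁻¹) • a - (‖b‖⁻¹) • b = (‖a‖⁻¹) • ((a - b) + ((‖b‖ - ‖a‖) * ‖b‖⁻¹) • b) := by
    have : (‖a‖⁻¹) * ((‖b‖ - ‖a‖) * ‖b‖⁻¹) = ‖a‖⁻¹ - ‖b‖⁻¹ := by field_simp
    rw [smul_add, smul_smul, this]
    module
  rw [h1, norm_smul, norm_inv, norm_norm]
  have h2 : ‖(a - b) + ((‖b‖ - ‖a‖) * ‖b‖⁻¹) • b‖ ≤ 2 * ‖a - b‖ := by
    refine (norm_add_le _ _).trans ?_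
    rw [norm_smul, norm_mul, norm_inv, norm_norm, mul_assoc, inv_mul_cancel₀ hb0.ne', mul_one]
    have := abs_norm_sub_norm_le b a
    rw [norm_sub_rev b a] at this
    rw [Real.norm_eq_abs]
    linarith
  calc ‖a‖⁻¹ * _ ≤ δ⁻¹ * (2 * ‖a - b‖) := by gcongr
    _ = _ := by ring

theorem bw_fixed (h : E → E) (hc : Continuous h) (B : ℝ) (hB : ∀ x, ‖h x‖ ≤ B) :
    ∃ x, h x = x := by
  by_contra hno
  push Not at hno
  letI : MeasurableSpace E := borel E
  haveI : BorelSpace E := ⟨rfl⟩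
  have hB0 : 0 ≤ B := (norm_nonneg _).trans (hB 0)
  -- cutoff
  let χ : E → ℝ := fun x => max 0 (min 1 (B + 2 - ‖x‖))
  have hχc : Continuous χ := by fun_prop
  have hχ0 : ∀ x, 0 ≤ χ x := fun x => le_max_left _ _
  have hχ1 : ∀ x, χ x ≤ 1 := fun x => max_le zero_le_one (min_le_left _ _)
  have hχin : ∀ x, ‖x‖ ≤ B → χ x = 1 := by
    intro x hx
    simp only [χ]
    rw [min_eq_left (by linarith), max_eq_right zero_le_one]
  have hχout : ∀ x, B + 2 ≤ ‖x‖ → χ x = 0 := by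
    intro x hx
    simp only [χ]
    exact max_eq_left ((min_le_right _ _).trans (by linarith))
  let k : E → E := fun x => χ x • h x
  have hkc : Continuous k := hχc.smul hc
  have hkB : ∀ x, ‖k x‖ ≤ B := by
    intro x
    simp only [k]
    rw [norm_smul, Real.norm_of_nonneg (hχ0 x)]
    nlinarith [hB x, hχ0 x, hχ1 x, norm_nonneg (h x)]
  have hkout : ∀ x, B + 2 ≤ ‖x‖ → k x = 0 := by
    intro x hx; simp [k, hχout x hx]
  have hkne : ∀ x, x - k x ≠ 0 := by
    intro x hx
    have hx' : x = k x := sub_eq_zero.1 hx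
    have h1 : ‖x‖ ≤ B := by rw [hx']; exact hkB x
    apply hno x
    conv_rhs => rw [hx']
    simp [k, hχin x h1]
  -- lower bound
  have hlow : ∃ δ > 0, ∀ x, δ ≤ ‖x - k x‖ := by
    obtain ⟨x0, -, hx0⟩ := (isCompact_closedBall (0 : E) (B + 2)).exists_isMinOn
      ⟨0, by simp; linarith⟩ (f := fun x => ‖x - k x‖) (by fun_prop)
    refine ⟨min 1 ‖x0 - k x0‖, lt_min one_pos (norm_pos_iff.2 (hkne x0)), fun x => ?_⟩
    by_cases hx : ‖x‖ ≤ B + 2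
    · exact (min_le_right _ _).trans (hx0 (by simpa using hx))
    · push Not at hx
      rw [hkout x hx.le, sub_zero]
      exact (min_le_left _ _).trans (by linarith)
  obtain ⟨δ, hδ, hδx⟩ := hlow
  obtain ⟨g, hgs, hga, hgsupp⟩ := hkc.exists_contDiff_approx 1 (ε := fun _ => δ / 2)
    continuous_const (fun _ => half_pos hδ)
  have hgout : ∀ x, B + 2 ≤ ‖x‖ → g x = 0 := by
    intro x hx
    by_contra hne
    exact hgsupp hne (hkout x hx)
  have hgs' : ContDiff ℝ 1 g := by exact_mod_cast hgs
  have hgcs : HasCompactSupport g := by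
    refine HasCompactSupport.intro (isCompact_closedBall (0 : E) (B + 2)) fun x hx => hgout x ?_
    simp at hx; exact hx.le
  obtain ⟨K, hK⟩ := ContDiff.lipschitzWith_of_hasCompactSupport hgcs hgs' one_ne_zero
  have hvδ : ∀ x, δ / 2 ≤ ‖x - g x‖ := by
    intro x
    have h1 := hδx x
    have h2 := hga x
    rw [dist_eq_norm] at h2
    have h3 : x - k x = (x - g x) + (g x - k x) := by abel
    rw [h3] at h1
    have := norm_add_le (x - g x) (g x - k x)
    linarith
  have hvs : ContDiff ℝ 1 fun x => x - g x := contDiff_id.sub hgs'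
  have hv0 : ∀ x, x - g x ≠ 0 := fun x hx => by
    have := hvδ x
    rw [hx, norm_zero] at this; linarith
  have hvl : LipschitzWith (1 + K) fun x => x - g x := LipschitzWith.id.sub hK
  refine bw_core (fun x => (‖x - g x‖⁻¹) • (x - g x)) (Real.toNNReal (2 / (δ / 2)) * (1 + K)) ?_ ?_ ?_
    (B + 2) (by linarith) ?_
  · exact ((hvs.norm ℝ hv0).inv (fun x => norm_ne_zero_iff.2 (hv0 x))).smul hvs
  · refine LipschitzWith.of_dist_le_mul fun a b => ?_
    have h1 := hvl.dist_le_mul a b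
    rw [dist_eq_norm] at h1 ⊢
    refine (bw_normalize (δ / 2) (half_pos hδ) _ _ (hvδ a) (hvδ b)).trans ?_
    rw [NNReal.coe_mul, Real.coe_toNNReal _ (by positivity), mul_assoc]
    exact mul_le_mul_of_nonneg_left h1 (by positivity)
  · intro x
    rw [norm_smul, norm_inv, norm_norm, inv_mul_cancel₀ (norm_ne_zero_iff.2 (hv0 x))]
  · intro x hx
    simp [hgout x hx]

end brouwer

lemma rc_sq {n m : ℕ} (A : Matrix (Fin n) (Fin m) ℂ) :
    frobNorm A ^ 2 = (Matrix.trace (A * Aᴴ)).re := by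
  unfold frobNorm
  rw [Real.sq_sqrt (by positivity)]
  simp only [Matrix.trace, Matrix.diag, Matrix.mul_apply, Matrix.conjTranspose_apply,
    Complex.re_sum]
  refine Finset.sum_congr rfl fun i _ => Finset.sum_congr rfl fun j _ => ?_
  rw [← Complex.normSq_eq_norm_sq, Complex.star_def, Complex.mul_conj, Complex.ofReal_re]

lemma rc_contr {n m : ℕ} (M : Matrix (Fin m) (Fin m) ℂ) (hM : M.PosSemidef) (w : ℝ) (hw : 0 < w)
    (A : Matrix (Fin n) (Fin m) ℂ) :
    frobNorm ((w⁻¹ • A) * (M + w⁻¹ • 1)⁻¹) ≤ frobNorm A := by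
  have hpd : (M + w⁻¹ • (1 : Matrix (Fin m) (Fin m) ℂ)).PosDef := by
    refine Matrix.PosDef.posSemidef_add hM ?_
    exact Matrix.PosDef.one.smul (inv_pos.2 hw)
  have hdet : IsUnit (M + w⁻¹ • (1 : Matrix (Fin m) (Fin m) ℂ)).det :=
    (Matrix.isUnit_iff_isUnit_det _).1 hpd.isUnit
  set Y := (w⁻¹ • A) * (M + w⁻¹ • 1)⁻¹ with hY
  have h1 : Y * (M + w⁻¹ • 1) = w⁻¹ • A := by
    rw [hY, Matrix.mul_assoc, Matrix.nonsing_inv_mul _ hdet, Matrix.mul_one]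
  have h2 : A = Y + w • (Y * M) := by
    have : w • (w⁻¹ • A) = A := by rw [smul_smul, mul_inv_cancel₀ hw.ne', one_smul]
    rw [← this, ← h1, Matrix.mul_add, smul_add, Matrix.mul_smul, Matrix.mul_one, smul_smul,
      mul_inv_cancel₀ hw.ne', one_smul, add_comm]
  have hMh : Mᴴ = M := hM.isHermitian
  have h3 : A * Aᴴ = Y * Yᴴ + (2 * w) • (Y * M * Yᴴ) + (w ^ 2) • ((Y * M) * (Y * M)ᴴ) := by
    rw [h2]
    simp only [Matrix.conjTranspose_add, Matrix.conjTranspose_smul, Matrix.conjTranspose_mul, hMh,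
      Matrix.add_mul, Matrix.mul_add, Matrix.smul_mul, Matrix.mul_smul, star_trivial,
      Matrix.mul_assoc]
    module
  have h4 : 0 ≤ (Matrix.trace (Y * M * Yᴴ)).re :=
    (Complex.le_def.1 (hM.mul_mul_conjTranspose_same Y).trace_nonneg).1
  have h5 := rc_sq (Y * M)
  have h6 : frobNorm A ^ 2 = frobNorm Y ^ 2 + 2 * w * (Matrix.trace (Y * M * Yᴴ)).re
      + w ^ 2 * frobNorm (Y * M) ^ 2 := by
    rw [rc_sq A, h3, rc_sq, rc_sq]
    simp only [Matrix.trace_add, Matrix.trace_smul, Complex.add_re, Complex.smul_re, smul_eq_mul]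
  refine le_of_sq_le_sq ?_ (Real.sqrt_nonneg _)
  rw [h6]
  have : 0 ≤ 2 * w * (Matrix.trace (Y * M * Yᴴ)).re := by positivity
  have : 0 ≤ w ^ 2 * frobNorm (Y * M) ^ 2 := by positivity
  linarith

lemma rc_norm {n m : ℕ} (A : Matrix (Fin n) (Fin m) ℂ) :
    ‖(WithLp.toLp 2 (fun p : Fin n × Fin m => A p.1 p.2) : EuclideanSpace ℂ (Fin n × Fin m))‖
      = frobNorm A := by
  rw [EuclideanSpace.norm_eq, frobNorm, Fintype.sum_prod_type]

lemma rc_add {n m : ℕ} (A C : Matrix (Fin n) (Fin m) ℂ) :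
    frobNorm (A + C) ≤ frobNorm A + frobNorm C := by
  rw [← rc_norm, ← rc_norm, ← rc_norm]
  exact norm_add_le (WithLp.toLp 2 (fun p : Fin n × Fin m => A p.1 p.2) :
    EuclideanSpace ℂ (Fin n × Fin m)) (WithLp.toLp 2 (fun p : Fin n × Fin m => C p.1 p.2))

lemma rc_brouwer {n m : ℕ} (F : Matrix (Fin n) (Fin m) ℂ → Matrix (Fin n) (Fin m) ℂ)
    (hF : Continuous F) (B : ℝ) (hB : ∀ X, frobNorm (F X) ≤ B) : ∃ X, F X = X := by
  let φ : Matrix (Fin n) (Fin m) ℂ → EuclideanSpace ℂ (Fin n × Fin m) := fun A => WithLp.toLp 2 (fun p => A p.1 p.2)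
  let ψ : EuclideanSpace ℂ (Fin n × Fin m) → Matrix (Fin n) (Fin m) ℂ := fun x => Matrix.of fun i j => x (i, j)
  have hφ : Continuous φ := by
    refine (PiLp.continuous_toLp 2 _).comp (continuous_pi fun p => ?_)
    exact continuous_id.matrix_elem p.1 p.2
  have hψ : Continuous ψ := continuous_matrix fun i j => by
    simp only [ψ, Matrix.of_apply]
    fun_prop
  obtain ⟨x, hx⟩ := bw_fixed (E := EuclideanSpace ℂ (Fin n × Fin m)) (fun x => φ (F (ψ x))) (hφ.comp (hF.comp hψ)) B
    (fun x => by rw [rc_norm]; exact hB _)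
  refine ⟨ψ x, ?_⟩
  have h1 : ψ (φ (F (ψ x))) = ψ x := congrArg ψ hx
  exact h1

lemma rc_cont2 {n m : ℕ} (R : Matrix (Fin n) (Fin m) ℂ) (c : ℝ) (G : Matrix (Fin m) (Fin m) ℂ)
    (f : Matrix (Fin n) (Fin m) ℂ → Matrix (Fin n) (Fin m) ℂ) (hf : Continuous f) :
    Continuous fun H => (R + c • f H) * G := by
  fun_prop

lemma rc_cont {n m : ℕ} (M : Matrix (Fin m) (Fin m) ℂ)
    (R : Matrix (Fin n) (Fin m) ℂ) (w t' : ℕ → ℝ)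
    (D : Matrix (Fin n) (Fin m) ℂ → Matrix (Fin n) (Fin m) ℂ) (hD : Continuous D) (i : ℕ) :
    Continuous fun H => innerIter M R w t' D H i := by
  induction i with
  | zero => exact continuous_id
  | succ i ih =>
    simp only [innerIter]
    have := hD.comp ih
    simp only [Function.comp_def] at this
    fun_prop

/-- **Existence of a fixed point of the inner-loop map.**  Under the bounded-denoiser
hypothesis, the inner-loop map `T : H0 ↦ H_N` admits at least one fixed point, lying in the
closed Frobenius ball of radius `R_limit = max_i ‖R (M + w_i⁻¹ I)⁻¹‖_F + B`. -/
theorem rcflow_fixed_point_existence {n m N : ℕ} (hn : 0 < n) (hm : 0 < m) (hN : 0 < N)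
    (M : Matrix (Fin m) (Fin m) ℂ) (hM : M.PosSemidef)
    (R : Matrix (Fin n) (Fin m) ℂ)
    (w t' : ℕ → ℝ) (hw : ∀ i < N, 0 < w i) (ht' : ∀ i < N, t' i ∈ Set.Ico (0 : ℝ) 1)
    (B : ℝ) (hB : 0 ≤ B)
    (D : Matrix (Fin n) (Fin m) ℂ → Matrix (Fin n) (Fin m) ℂ)
    (hDcont : Continuous D) (hDbdd : ∀ H, frobNorm (D H) ≤ B) :
    ∃ Hstar : Matrix (Fin n) (Fin m) ℂ,
      innerIter M R w t' D Hstar N = Hstar ∧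
      frobNorm Hstar ≤
        ((Finset.range N).sup' (Finset.nonempty_range_iff.mpr hN.ne')
          fun i => frobNorm (R * (M + (w i)⁻¹ • 1)⁻¹)) + B := by
  obtain ⟨k, rfl⟩ : ∃ k, N = k + 1 := ⟨N - 1, by omega⟩
  have hkk : k < k + 1 := Nat.lt_succ_self k
  set L := ((Finset.range (k + 1)).sup' (Finset.nonempty_range_iff.mpr hN.ne')
          fun i => frobNorm (R * (M + (w i)⁻¹ • 1)⁻¹)) with hL
  let F : Matrix (Fin n) (Fin m) ℂ → Matrix (Fin n) (Fin m) ℂ := fun H =>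
    (R + (w k)⁻¹ • D (innerIter M R w t' D H k)) * (M + (w k)⁻¹ • 1)⁻¹
  have hF : Continuous F :=
    rc_cont2 R _ _ _ (hDcont.comp (rc_cont M R w t' D hDcont k))
  have hFB : ∀ X, frobNorm (F X) ≤ L + B := by
    intro X
    simp only [F]
    rw [Matrix.add_mul]
    refine (rc_add _ _).trans (add_le_add ?_ ?_)
    · exact Finset.le_sup' (fun i => frobNorm (R * (M + (w i)⁻¹ • 1)⁻¹)) (Finset.mem_range.2 hkk)
    · exact (rc_contr M hM (w k) (hw k hkk) _).trans (hDbdd _)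
  obtain ⟨X, hX⟩ := rc_brouwer F hF _ hFB
  refine ⟨X, ?_, ?_⟩
  · change t' k • X + (1 - t' k) • F X = X
    rw [hX]
    module
  · rw [← hX]
    exact hFB X
end

section
/- (Linear convergence of the recursive iteration for affine inner-loop dynamics.) Let E = ℂ^d, let N be a positive integer, let T_0, …, T_{N−1} : E → E be linear maps with operator norms ‖T_n‖ ≤ γ for some γ ∈ [0,1), let b_0, …, b_{N−1} ∈ E, and let t_0, …, t_{N−1} ∈ [0,1). Define G : E → E by G(x) = x_N, where x_0 = x and x_{i+1} = t_i x + (1 − t_i)(T_i x_i + b_i) for i = 0, …, N−1. Then G is Lipschitz with some constant c < 1; consequently G has a unique fixed point x*, and for every x ∈ E the recursive iterates satisfy ‖G^{(k)}(x) − x*‖ ≤ c^k ‖x − x*‖ for all k ≥ 0, i.e., the recursion converges linearly to x* from any initialization. -/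
/-- The affine inner-loop recursion with anchor `x`:
`x_0 = x`, `x_{i+1} = t_i • x + (1 − t_i) • (T_i x_i + b_i)`. -/
noncomputable def affIter {d : ℕ}
    (T : ℕ → EuclideanSpace ℂ (Fin d) →L[ℂ] EuclideanSpace ℂ (Fin d))
    (b : ℕ → EuclideanSpace ℂ (Fin d)) (t : ℕ → ℝ)
    (x : EuclideanSpace ℂ (Fin d)) : ℕ → EuclideanSpace ℂ (Fin d)
  | 0 => x
  | i + 1 => t i • x + (1 - t i) • (T i (affIter T b t x i) + b i)

/-- **Linear convergence of the recursive iteration for affine inner-loop dynamics.**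
If `‖T_n‖ ≤ γ < 1` and `t_i ∈ [0,1)`, then the outer-loop map `G : x ↦ x_N` is Lipschitz
with some constant `c < 1`; consequently `G` has a unique fixed point `x*` and the recursive
iterates satisfy `‖G^[k] x − x*‖ ≤ c^k ‖x − x*‖` for every `x` and every `k ≥ 0`. -/
theorem recursive_flow_linear_convergence {d N : ℕ} (hN : 0 < N)
    (T : ℕ → EuclideanSpace ℂ (Fin d) →L[ℂ] EuclideanSpace ℂ (Fin d))
    (b : ℕ → EuclideanSpace ℂ (Fin d))
    (t : ℕ → ℝ) (ht : ∀ n < N, t n ∈ Set.Ico (0 : ℝ) 1)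
    (γ : ℝ) (hγ : γ ∈ Set.Ico (0 : ℝ) 1) (hT : ∀ n < N, ‖T n‖ ≤ γ)
    (G : EuclideanSpace ℂ (Fin d) → EuclideanSpace ℂ (Fin d))
    (hG : ∀ x, G x = affIter T b t x N) :
    ∃ c : ℝ, 0 ≤ c ∧ c < 1 ∧
      (∀ x y, ‖G x - G y‖ ≤ c * ‖x - y‖) ∧
      ∃ xstar : EuclideanSpace ℂ (Fin d), G xstar = xstar ∧
        (∀ y, G y = y → y = xstar) ∧
        ∀ x, ∀ k : ℕ, ‖G^[k] x - xstar‖ ≤ c ^ k * ‖x - xstar‖ := by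
  obtain ⟨hγ0, hγ1⟩ := hγ
  have key : ∀ n, n ≤ N → ∃ c : ℝ, 0 ≤ c ∧ c ≤ 1 ∧ (0 < n → c < 1) ∧
      ∀ x y, ‖affIter T b t x n - affIter T b t y n‖ ≤ c * ‖x - y‖ := by
    intro n
    induction n with
    | zero =>
      intro _
      exact ⟨1, zero_le_one, le_refl _, fun h => absurd h (lt_irrefl _), fun x y => by
        simp [affIter]⟩
    | succ n ih =>
      intro hn
      obtain ⟨c, hc0, hc1, -, hc⟩ := ih (by omega)
      obtain ⟨ht0, ht1⟩ := ht n (by omega)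
      have hTn := hT n (by omega)
      have h1 : 0 < 1 - t n := by linarith
      have hγc : γ * c < 1 := by nlinarith
      have hγc0 : 0 ≤ γ * c := mul_nonneg hγ0 hc0
      have hlt : t n + (1 - t n) * (γ * c) < 1 := by nlinarith
      refine ⟨t n + (1 - t n) * (γ * c), by positivity, hlt.le, fun _ => hlt, fun x y => ?_⟩
      have e : affIter T b t x (n + 1) - affIter T b t y (n + 1)
          = t n • (x - y) + (1 - t n) • T n (affIter T b t x n - affIter T b t y n) := by
        simp only [affIter, map_sub, smul_sub, smul_add]
        abel
      have hle : ‖T n (affIter T b t x n - affIter T b t y n)‖ ≤ γ * (c * ‖x - y‖) :=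
        ((T n).le_opNorm _).trans (mul_le_mul hTn (hc x y) (norm_nonneg _) hγ0)
      rw [e]
      refine (norm_add_le _ _).trans ?_
      rw [norm_smul, norm_smul, Real.norm_of_nonneg ht0, Real.norm_of_nonneg h1.le]
      have := mul_le_mul_of_nonneg_left hle h1.le
      linarith
  obtain ⟨c, hc0, -, hc1, hc⟩ := key N le_rfl
  have hlip : ∀ x y, ‖G x - G y‖ ≤ c * ‖x - y‖ := fun x y => by
    rw [hG, hG]; exact hc x y
  have hcon : ContractingWith ⟨c, hc0⟩ G := by
    refine ⟨by exact_mod_cast hc1 hN, LipschitzWith.of_dist_le_mul fun x y => ?_⟩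
    rw [dist_eq_norm, dist_eq_norm]
    exact hlip x y
  have hfix : G (hcon.fixedPoint G) = hcon.fixedPoint G := hcon.fixedPoint_isFixedPt
  refine ⟨c, hc0, hc1 hN, hlip, hcon.fixedPoint G, hfix,
    fun y hy => hcon.fixedPoint_unique hy, fun x k => ?_⟩
  induction k with
  | zero => simp
  | succ k ih =>
    rw [Function.iterate_succ_apply']
    have h := hlip (G^[k] x) (hcon.fixedPoint G)
    rw [hfix] at h
    refine h.trans ?_
    rw [pow_succ', mul_assoc]
    exact mul_le_mul_of_nonneg_left ih hc0
end
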